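/- For all integers d ≥ 1 and r ≥ 0, the number of balanced shifted tableaux of shape Z(d,r) equals the number of reduced words of w^{(d,r)}: |BS(Z(d,r))| = |Red(w^{(d,r)})|. -/

import Mathlib

open scoped BigOperators

namespace BST

/-- `lam` (1-indexed, with `d` parts) is a strict partition: strictly decreasing
positive parts `lam 1 > lam 2 > ⋯ > lam d > 0`. -/
def IsStrictPartition (d : ℕ) (lam : ℕ → ℕ) : Prop :=
  (∀ i : ℕ, 1 ≤ i → i < d → lam (i + 1) < lam i) ∧ 1 ≤ lam d

/-- The size `|λ| = λ_1 + ⋯ + λ_d`. -/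
def sizeP (d : ℕ) (lam : ℕ → ℕ) : ℕ := ∑ i ∈ Finset.Icc 1 d, lam i

/-- The shifted diagram `D(λ) ⊆ ℤ × ℤ`: row `i` (1 ≤ i ≤ d) occupies columns
`i - d, …, λ_i + i - d - 1`. -/
def Diagram (d : ℕ) (lam : ℕ → ℕ) : Set (ℤ × ℤ) :=
  {p : ℤ × ℤ | 1 ≤ p.1 ∧ p.1 ≤ (d : ℤ) ∧ p.1 - (d : ℤ) ≤ p.2 ∧
    p.2 + (d : ℤ) + 1 ≤ (lam p.1.toNat : ℤ) + p.1}

/-- The hook `H(i,c)`. -/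
def Hook (d : ℕ) (lam : ℕ → ℕ) (i c : ℤ) : Set (ℤ × ℤ) :=
  {(i, c)} ∪ {p ∈ Diagram d lam | (p.1 = i ∧ c < p.2) ∨ (p.2 = c ∧ i < p.1)} ∪
    {p ∈ Diagram d lam | c < 0 ∧ p.1 = (d : ℤ) + 1 + c}

/-- The extended hook `H̃(i,c)`. -/
def ExtHook (d : ℕ) (lam : ℕ → ℕ) (i c : ℤ) : Set (ℤ × ℤ) :=
  Hook d lam i c ∪ {p : ℤ × ℤ | c < 0 ∧ p = ((d : ℤ) + 1 + c, c)}

/-- The extended diagram `D(λ) ∪ {(i, i - d - 1) : 1 ≤ i ≤ d}`. -/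
def ExtDiagram (d : ℕ) (lam : ℕ → ℕ) : Set (ℤ × ℤ) :=
  Diagram d lam ∪ {p : ℤ × ℤ | 1 ≤ p.1 ∧ p.1 ≤ (d : ℤ) ∧ p.2 = p.1 - ((d : ℤ) + 1)}

/-- The extended filling `B̃`, with `B̃(i, i - d - 1) = B(i, 0)`. -/
def ExtFilling (d : ℕ) (B : ℤ × ℤ → ℕ) : ℤ × ℤ → ℕ :=
  fun p => if p.2 = p.1 - ((d : ℤ) + 1) then B (p.1, 0) else B p

/-- The rank function `rk(i,c)`. -/
def rk (d : ℕ) (lam : ℕ → ℕ) (i c : ℤ) : ℤ :=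
  if 0 ≤ c then (lam i.toNat : ℤ) - d + i - c
  else (lam i.toNat : ℤ) - d + i + (lam ((d : ℤ) + 1 + c).toNat : ℤ) + c + 1

/-- A bijective filling of `D(λ)` with `1, …, |λ|` (normalized to be `0` off the diagram). -/
def IsFilling (d : ℕ) (lam : ℕ → ℕ) (B : ℤ × ℤ → ℕ) : Prop :=
  Set.BijOn B (Diagram d lam) (Set.Icc 1 (sizeP d lam)) ∧
    ∀ p : ℤ × ℤ, p ∉ Diagram d lam → B p = 0

/-- A balanced shifted tableau: a bijective filling such that at each box `(i,c)`,
`B(i,c)` is the `rk(i,c)`-th largest entry of the multiset of values of `B̃` on the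
extended hook, i.e. exactly `rk(i,c) - 1` boxes of the extended hook carry a value
strictly larger than `B(i,c)`. -/
def IsBalanced (d : ℕ) (lam : ℕ → ℕ) (B : ℤ × ℤ → ℕ) : Prop :=
  IsFilling d lam B ∧ ∀ p ∈ Diagram d lam,
    ({q ∈ ExtHook d lam p.1 p.2 | B p < ExtFilling d B q}.ncard : ℤ) =
      rk d lam p.1 p.2 - 1

/-- A standard Young tableau of shifted shape `λ`. -/
def IsSYT (d : ℕ) (lam : ℕ → ℕ) (B : ℤ × ℤ → ℕ) : Prop :=
  IsFilling d lam B ∧ ∀ p ∈ Diagram d lam, ∀ q ∈ Diagram d lam,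
    ((p.1 = q.1 ∧ p.2 < q.2) → B p < B q) ∧ ((p.2 = q.2 ∧ p.1 < q.1) → B p < B q)

/-- The simple reflections of `W(B_n)`, acting on `ℤ`: `s 0` swaps `1 ↔ -1`,
and `s a` (for `a ≥ 1`) swaps `a ↔ a+1` and `-a ↔ -(a+1)`. -/
def sB (a : ℕ) : Equiv.Perm ℤ :=
  if a = 0 then Equiv.swap 1 (-1)
  else Equiv.swap (a : ℤ) ((a : ℤ) + 1) * Equiv.swap (-(a : ℤ)) (-(a : ℤ) - 1)

/-- The product `s_{a_1} s_{a_2} ⋯ s_{a_m}` of a word. -/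
def wordProd (L : List ℕ) : Equiv.Perm ℤ := (L.map sB).prod

/-- A signed permutation in `W(B_n)`: odd, and the identity beyond `n`. -/
def IsSignedPerm (n : ℕ) (w : Equiv.Perm ℤ) : Prop :=
  (∀ i : ℤ, w (-i) = -(w i)) ∧ ∀ i : ℤ, (n : ℤ) < |i| → w i = i

/-- The Coxeter length of `w` in `W(B_n)`. -/
noncomputable def lengthB (n : ℕ) (w : Equiv.Perm ℤ) : ℕ :=
  sInf {m : ℕ | ∃ L : List ℕ, (∀ a ∈ L, a < n) ∧ wordProd L = w ∧ L.length = m}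

/-- `L` is a reduced word of `w` in `W(B_n)`. -/
def IsReducedWord (n : ℕ) (w : Equiv.Perm ℤ) (L : List ℕ) : Prop :=
  (∀ a ∈ L, a < n) ∧ wordProd L = w ∧ L.length = lengthB n w

/-- The vector `e_k` (for `k ≥ 1` the `k`-th standard basis vector, with the
conventions `e 0 = 0` and `e (-k) = - e k`), represented as an odd function `ℤ → ℤ`. -/
def eVec (k : ℤ) : ℤ → ℤ :=
  fun t => if t = 0 then 0 else if t = k then 1 else if t = -k then -1 else 0

/-- The positive roots of type `B_n`. -/
def PosRoots (n : ℕ) : Set (ℤ → ℤ) :=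
  {v | (∃ i j : ℤ, 1 ≤ i ∧ i < j ∧ j ≤ (n : ℤ) ∧
        (v = eVec j - eVec i ∨ v = eVec j + eVec i)) ∨
       (∃ i : ℤ, 1 ≤ i ∧ i ≤ (n : ℤ) ∧ v = eVec i)}

/-- The action of a signed permutation on vectors: `w · e_i = e_{w(i)}`. -/
def actB (w : Equiv.Perm ℤ) (v : ℤ → ℤ) : ℤ → ℤ := fun t => v (w⁻¹ t)

/-- The inversion set `Inv(w) = {α ∈ Φ⁺ : w⁻¹ · α ∈ -Φ⁺}`. -/
def InvSet (n : ℕ) (w : Equiv.Perm ℤ) : Set (ℤ → ℤ) :=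
  {α | α ∈ PosRoots n ∧ -(actB w⁻¹ α) ∈ PosRoots n}

/-- The simple roots: `α_0 = e_1` and `α_a = e_{a+1} - e_a` for `a ≥ 1`. -/
def alphaRoot (a : ℕ) : ℤ → ℤ :=
  if a = 0 then eVec 1 else eVec ((a : ℤ) + 1) - eVec (a : ℤ)

/-- The reflection order of a word: `reflOrder L t = γ_{t+1} = s_{a_1} ⋯ s_{a_t} · α_{a_{t+1}}`
(0-indexed). -/
def reflOrder (L : List ℕ) (t : ℕ) : ℤ → ℤ :=
  actB (wordProd (L.take t)) (alphaRoot (L.getD t 0))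

/-- The trapezoid `Z(d,r) = (r+2d-1, r+2d-3, …, r+1)`. -/
def Zlam (d r : ℕ) : ℕ → ℕ := fun i => r + 2 * d + 1 - 2 * i

/-- The labeling `f : D(Z(d,r)) → Φ⁺`. -/
def fLabel (d r : ℕ) (p : ℤ × ℤ) : ℤ → ℤ :=
  if p.2 ≤ 0 then eVec ((d : ℤ) + 1 - p.1) - eVec p.2
  else if p.2 ≤ (r : ℤ) then eVec ((d : ℤ) + 1 - p.1) + eVec (p.2 + (d : ℤ))
  else eVec ((d : ℤ) + 1 - p.1) - eVec (p.2 - (r : ℤ))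

/-- The extended labeling `f̃`, with `f̃(i, i - d - 1) = 2 e_{d+1-i}`. -/
def fExtLabel (d r : ℕ) (p : ℤ × ℤ) : ℤ → ℤ :=
  if p.2 = p.1 - ((d : ℤ) + 1) then (2 : ℤ) • eVec ((d : ℤ) + 1 - p.1)
  else fLabel d r p

/-- `w` is the signed permutation `w^{(d,r)} ∈ W(B_{d+r})`, i.e.
`w(i) = d + i` for `1 ≤ i ≤ r` and `w(i) = -(i - r)` for `r < i ≤ d + r`. -/
def IsWdr (d r : ℕ) (w : Equiv.Perm ℤ) : Prop :=
  IsSignedPerm (d + r) w ∧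
    (∀ i : ℤ, 1 ≤ i → i ≤ (r : ℤ) → w i = (d : ℤ) + i) ∧
    (∀ i : ℤ, (r : ℤ) < i → i ≤ (d : ℤ) + (r : ℤ) → w i = -(i - r))


/-- `x` lies strictly between `y` and `z` (i.e. `min(y,z) < x < max(y,z)`). -/
def Between (x y z : ℕ) : Prop := (y < x ∧ x < z) ∨ (z < x ∧ x < y)

/-- A nonempty list is unimodal: strictly decreasing down to its minimum
(at 0-indexed position `k`), then strictly increasing. -/
def Unimodal (L : List ℕ) : Prop :=
  ∃ k : ℕ, k < L.length ∧
    (∀ a b : ℕ, a < b → b ≤ k → L.getD b 0 < L.getD a 0) ∧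
    (∀ a b : ℕ, k ≤ a → a < b → b < L.length → L.getD a 0 < L.getD b 0)

/-- Row `i` of the distinguished tableau of shape `Z(d,r)`:
`(r+d-i, …, r+1, 0, 1, …, r+d-i)`. -/
def rowWord (d r i : ℕ) : List ℕ :=
  (List.range (r + 2 * (d - i) + 1)).map fun t =>
    if t < d - i then r + (d - i) - t else t - (d - i)

/-- The reading word `π(T) = T_d T_{d-1} ⋯ T_1` of the distinguished tableau of
shape `Z(d,r)`. -/
def piWord (d r : ℕ) : List ℕ :=
  (List.range d).flatMap fun k => rowWord d r (d - k)

/-- `μ_i = Z(d,r)_i - λ_i`. -/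
def muF (d r : ℕ) (lam : ℕ → ℕ) (i : ℕ) : ℕ := r + 2 * d + 1 - 2 * i - lam i

/-- `σ_i = μ_1 + ⋯ + μ_i`. -/
def sigmaF (d r : ℕ) (lam : ℕ → ℕ) (i : ℕ) : ℕ := ∑ t ∈ Finset.Icc 1 i, muF d r lam t

/-- `ν_i = min{μ_i, …, μ_d}`. -/
noncomputable def nuF (d r : ℕ) (lam : ℕ → ℕ) (i : ℕ) : ℕ :=
  sInf {m : ℕ | ∃ j : ℕ, i ≤ j ∧ j ≤ d ∧ m = muF d r lam j}

/-- The word `a^λ`: the concatenation over `i = 1, …, d` of the increasing runs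
`(d+r-i-μ_i+1, …, d+r-i)`. -/
def aLamWord (d r : ℕ) (lam : ℕ → ℕ) : List ℕ :=
  (List.range d).flatMap fun k =>
    (List.range (muF d r lam (k + 1))).map fun t =>
      d + r - (k + 1) - muF d r lam (k + 1) + 1 + t

/-- Row `i` of the tableau `P(w^λ)`: entries `P(i,c) = c` for `c ≥ 0` and
`P(i,c) = r - c - ν_{d+1+c}` for `c < 0`. -/
noncomputable def rowWordP (d r : ℕ) (lam : ℕ → ℕ) (i : ℕ) : List ℕ :=
  (List.range (lam i)).map fun t =>
    if t < d - i then r + (d - i) - t - nuF d r lam (i + 1 + t) else t - (d - i)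

/-- The reading word `π(P(w^λ))`. -/
noncomputable def piWordP (d r : ℕ) (lam : ℕ → ℕ) : List ℕ :=
  (List.range d).flatMap fun k => rowWordP d r lam (d - k)

/-- The shape obtained from `λ` by adding one box at the end of row `i`. -/
def stepShape (lam : ℕ → ℕ) (i : ℕ) : ℕ → ℕ :=
  fun t => if t = i then lam i + 1 else lam t

/-- The box-adding map `f_i` on fillings: swap columns `j = λ_i + i - d` and `j + 1`
(in rows `1, …, i-1`), and put the value `N + 1` in the new box `(i, j)`. -/
def addBox (d : ℕ) (lam : ℕ → ℕ) (i : ℕ) (N : ℕ) (B : ℤ × ℤ → ℕ) : ℤ × ℤ → ℕ :=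
  fun p =>
    if p = ((i : ℤ), (lam i : ℤ) + (i : ℤ) - (d : ℤ)) then N + 1
    else if 1 ≤ p.1 ∧ p.1 < (i : ℤ) ∧ p.2 = (lam i : ℤ) + (i : ℤ) - (d : ℤ) then
      B (p.1, p.2 + 1)
    else if 1 ≤ p.1 ∧ p.1 < (i : ℤ) ∧ p.2 = (lam i : ℤ) + (i : ℤ) - (d : ℤ) + 1 then
      B (p.1, p.2 - 1)
    else B p

/-- Successively apply the box-adding maps along a list of row indices,
tracking the current shape. -/
def FmapAux (d : ℕ) : List ℕ → (ℕ → ℕ) → (ℤ × ℤ → ℕ) → (ℤ × ℤ → ℕ)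
  | [], _, B => B
  | i :: rest, lam, B => FmapAux d rest (stepShape lam i) (addBox d lam i (sizeP d lam) B)

/-- The shape after successively adding boxes along a list of row indices. -/
def shapeAux : List ℕ → (ℕ → ℕ) → (ℕ → ℕ)
  | [], lam => lam
  | i :: rest, lam => shapeAux rest (stepShape lam i)

/-- The list of row indices `1^{μ_1} 2^{μ_2} ⋯ d^{μ_d}` used to pad `λ` to `Z(d,r)`. -/
def rowsList (d r : ℕ) (lam : ℕ → ℕ) : List ℕ :=
  (List.range d).flatMap fun k => List.replicate (muF d r lam (k + 1)) (k + 1)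

/-- `BS(Z(d,r))|_λ`: balanced tableaux of shape `Z(d,r)` such that for each
`i ∈ {1,…,d}` the entries `N + σ_{i-1} + 1, …, N + σ_i` all occur in row `i`. -/
def BSRestricted (d r : ℕ) (lam : ℕ → ℕ) : Set (ℤ × ℤ → ℕ) :=
  {T | IsBalanced d (Zlam d r) T ∧ ∀ i : ℕ, 1 ≤ i → i ≤ d →
    ∀ k : ℕ, sizeP d lam + sigmaF d r lam (i - 1) + 1 ≤ k →
      k ≤ sizeP d lam + sigmaF d r lam i →
      ∃ c : ℤ, ((i : ℤ), c) ∈ Diagram d (Zlam d r) ∧ T ((i : ℤ), c) = k}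

/-- `w ∈ W(B_n)` pattern embeds the signed pattern `v` (given as its one-line
notation, a list of nonzero integers). -/
def PatternEmbeds (n : ℕ) (w : Equiv.Perm ℤ) (v : List ℤ) : Prop :=
  ∃ idx : Fin v.length → ℤ, StrictMono idx ∧
    (∀ j, 1 ≤ idx j ∧ idx j ≤ (n : ℤ)) ∧
    (∀ j, 0 < w (idx j) ↔ 0 < v.get j) ∧
    (∀ j k, |w (idx j)| < |w (idx k)| ↔ |v.get j| < |v.get k|)


def rp (i k : ℤ) : ℤ × ℤ := if 0 < i + k then (i, k) else if i + k < 0 then (-k, -i) else (0, k)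

def Rt (w : Equiv.Perm ℤ) : Set (ℤ × ℤ) := {q | -q.2 < q.1 ∧ q.1 < q.2 ∧ w q.2 < w q.1}

def tm (w : Equiv.Perm ℤ) (f : ℤ × ℤ → ℕ) (i k j : ℤ) : ℕ :=
  (if w k < w j ∧ f (rp j k) < f (rp i k) then 1 else 0) +
    (if w j < w i ∧ f (rp i j) < f (rp i k) then 1 else 0)

def BalF (w : Equiv.Perm ℤ) (N : ℕ) (f : ℤ × ℤ → ℕ) : Prop :=
  Set.BijOn f (Rt w) (Set.Icc 1 N) ∧ (∀ q, q ∉ Rt w → f q = 0) ∧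
    ∀ q ∈ Rt w, ∑ j ∈ Finset.Ioo q.1 q.2, tm w f q.1 q.2 j = (Finset.Ioo q.1 q.2).card

def Odd' (w : Equiv.Perm ℤ) : Prop := ∀ i : ℤ, w (-i) = -(w i)

theorem Odd'.zero {w : Equiv.Perm ℤ} (h : Odd' w) : w 0 = 0 := by
  have := h 0
  simp at this
  omega

theorem rp_mem {w : Equiv.Perm ℤ} (h : Odd' w) {i k : ℤ} (hik : i < k) :
    rp i k ∈ Rt w ↔ w k < w i := by
  have h1 := h i
  have h2 := h k
  have h0 := h.zero
  unfold rp Rt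
  split_ifs with c1 c2
  · simp; omega
  · simp only [Set.mem_ofPred_eq, h1, h2]; constructor <;> intro h <;> (try refine ⟨?_, ?_, ?_⟩) <;> omega
  · have : i = -k := by omega
    subst this
    simp only [Set.mem_ofPred_eq, h2, h0]; constructor <;> intro h <;> (try refine ⟨?_, ?_, ?_⟩) <;> omega

theorem rp_self {q : ℤ × ℤ} (h : -q.2 < q.1) : rp q.1 q.2 = q := by
  unfold rp; rw [if_pos (by omega)]

theorem rp_neg {i k : ℤ} (h : i ≠ - k) : rp (-k) (-i) = rp i k := by
  unfold rp
  split_ifs <;> first | omega | simp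

theorem rp_neg' {i k : ℤ} : rp (-k) (-i) = rp i k := by
  unfold rp
  split_ifs <;> first | omega | (simp; try omega)

/-- general balance -/
theorem bal_gen {w : Equiv.Perm ℤ} (h : Odd' w) {N : ℕ} {f : ℤ × ℤ → ℕ} (hb : BalF w N f)
    {i k : ℤ} (hik : i < k) (hw : w k < w i) (hne : i + k ≠ 0) :
    ∑ j ∈ Finset.Ioo i k, tm w f i k j = (Finset.Ioo i k).card := by
  rcases lt_or_gt_of_ne hne with c | c
  · have := hb.2.2 (-k, -i) ⟨by simp; omega, by simp; omega, by simp only [h i, h k]; omega⟩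
    simp only at this
    have e : (Finset.Ioo (-k) (-i)).card = (Finset.Ioo i k).card := by simp; congr 1; omega
    rw [e] at this
    rw [← this]
    refine Finset.sum_nbij' (fun j => -j) (fun j => -j) ?_ ?_ ?_ ?_ ?_
    · intro j hj; simp at hj ⊢; omega
    · intro j hj; simp at hj ⊢; omega
    · simp
    · simp
    · intro j hj
      unfold tm
      simp only [rp_neg', h i, h j, h k, neg_lt_neg_iff]
      rw [add_comm]
  · exact hb.2.2 (i, k) ⟨by simp; omega, hik, hw⟩

theorem pairP {w : Equiv.Perm ℤ} (h : Odd' w) {N : ℕ} {f : ℤ × ℤ → ℕ} (hb : BalF w N f)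
    {i k : ℤ} (hik : i < k) (hw : w k < w i) (hne : i + k ≠ 0) (j0 : ℤ) (hj1 : i < j0) (hj2 : j0 < k)
    (h1 : ¬ (w k < w j0 ∧ f (rp j0 k) < f (rp i k))) (h2 : ¬ (w j0 < w i ∧ f (rp i j0) < f (rp i k))) :
    ∃ j, i < j ∧ j < k ∧ w k < w j ∧ w j < w i := by
  have hs := bal_gen h hb hik hw hne
  by_contra! hc
  have : ∑ j ∈ Finset.Ioo i k, tm w f i k j < ∑ j ∈ Finset.Ioo i k, 1 := by
    refine Finset.sum_lt_sum ?_ ⟨j0, by simp; omega, ?_⟩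
    · intro j hj
      simp at hj
      have := hc j hj.1 hj.2
      unfold tm
      split_ifs <;> first | omega
    · unfold tm; rw [if_neg h1, if_neg h2]; simp
  simp at this hs
  omega

theorem adj_of_max {w : Equiv.Perm ℤ} (h : Odd' w) {N : ℕ} {f : ℤ × ℤ → ℕ} (hb : BalF w N f)
    {q : ℤ × ℤ} (hq : q ∈ Rt w) (hf : f q = N) : w q.1 = w q.2 + 1 := by
  obtain ⟨x, y⟩ := q
  obtain ⟨hxy1, hxy, hwxy⟩ := hq
  simp only at hxy1 hxy hwxy ⊢
  have hle : ∀ q, f q ≤ N := by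
    intro q
    by_cases hq : q ∈ Rt w
    · exact (hb.1.mapsTo hq).2
    · rw [hb.2.1 q hq]; omega
  have hrs : rp x y = (x, y) := rp_self (q := (x, y)) hxy1
  have hlt : ∀ q ∈ Rt w, q ≠ (x, y) → f q < f (x, y) := by
    intro q hq hn
    refine lt_of_le_of_ne (hf ▸ hle q) fun e => hn ?_
    exact hb.1.injOn hq ⟨hxy1, hxy, hwxy⟩ e
  have nb : ∀ j, x < j → j < y → ¬ (w y < w j ∧ w j < w x) := by
    intro j0 hj1 hj2 hjj
    have hs := bal_gen h hb hxy hwxy (by omega)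
    have : ∑ j ∈ Finset.Ioo x y, 1 < ∑ j ∈ Finset.Ioo x y, tm w f x y j := by
      have key : ∀ j, x < j → j < y → (w y < w j → f (rp j y) < f (rp x y)) ∧ (w j < w x → f (rp x j) < f (rp x y)) := by
        intro j h1 h2
        rw [hrs]
        constructor
        · intro h3
          apply hlt _ ((rp_mem h h2).2 h3)
          unfold rp; rw [if_pos (by omega)]; simp; omega
        · intro h3
          apply hlt _ ((rp_mem h h1).2 h3)
          unfold rp; split_ifs <;> simp <;> omega
      refine Finset.sum_lt_sum ?_ ⟨j0, by simp; omega, ?_⟩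
      · intro j hj
        simp at hj
        have := key j hj.1 hj.2
        have : w y < w j ∨ w j < w x := by omega
        unfold tm
        split_ifs <;> omega
      · have := key j0 hj1 hj2
        unfold tm; rw [if_pos ⟨hjj.1, this.1 hjj.1⟩, if_pos ⟨hjj.2, this.2 hjj.2⟩]; simp
    simp at this hs
    omega
  have na : ∀ n : ℕ, ∀ m, y < m → m < y + n → ¬ (w y < w m ∧ w m < w x) := by
    intro n
    induction n with
    | zero => intro m h1 h2; simp at h2; omega
    | succ n ih =>
      intro m h1 h2 h3
      obtain ⟨j, k1, k2, k3, k4⟩ := pairP h hb (i := x) (k := m) (by omega) (by omega) (by omega) y hxy h1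
        (by omega) (by rw [hrs, hf]; have := hle (rp x m); omega)
      rcases lt_trichotomy j y with c | c | c
      · exact nb j k1 c ⟨by omega, k4⟩
      · subst c; omega
      · push_cast at h2
        exact ih j c (by omega) ⟨by omega, k4⟩
  have na' : ∀ m, y < m → ¬ (w y < w m ∧ w m < w x) := fun m hm => na (m - y + 1).toNat m hm (by omega)
  have nc : ∀ n : ℕ, ∀ m, m < x → x - n < m → ¬ (w y < w m ∧ w m < w x) := by
    intro n
    induction n with
    | zero => intro m h1 h2; simp at h2; omega
    | succ n ih =>
      intro m h1 h2 h3
      push_cast at h2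
      have hm : m + y ≠ 0 := by
        intro e
        have : m = -y := by omega
        subst this
        have e := h y
        have h0 := h.zero
        have hx0 : x ≠ 0 := by rintro rfl; omega
        by_cases c : x < 0
        · exact nb 0 c (by omega) (by omega)
        · exact ih 0 (by omega) (by omega) (by omega)
      obtain ⟨j, k1, k2, k3, k4⟩ := pairP h hb (i := m) (k := y) (by omega) (by omega) (by omega) x h1 hxy
        (by rw [hrs, hf]; have := hle (rp m y); omega) (by omega)
      rcases lt_trichotomy j x with c | c | c
      · exact ih j c (by omega) ⟨by omega, by omega⟩
      · subst c; omega
      · exact nb j c k2 ⟨by omega, by omega⟩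
  have nc' : ∀ m, m < x → ¬ (w y < w m ∧ w m < w x) := fun m hm => nc (x - m + 1).toNat m hm (by omega)
  by_contra hne
  obtain ⟨m, hm⟩ := w.surjective (w y + 1)
  have h5 : w y < w m ∧ w m < w x := by omega
  rcases lt_trichotomy m x with c | c | c
  · exact nc' m c h5
  · subst c; omega
  · rcases lt_trichotomy m y with c' | c' | c'
    · exact nb m c c' h5
    · subst c'; omega
    · exact na' m c' h5
theorem sB_apply (a : ℕ) (t : ℤ) : sB a t = if a = 0 then (if t = 1 then -1 else if t = -1 then 1 else t)
    else if t = a then a + 1 else if t = a + 1 then a else if t = -a then -a - 1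
    else if t = -a - 1 then -a else t := by
  unfold sB
  by_cases h : a = 0
  · simp [h, Equiv.swap_apply_def]
  · have : (0:ℤ) < a := by omega
    simp only [h, if_false, Equiv.Perm.mul_apply, Equiv.swap_apply_def]
    split_ifs <;> omega

theorem sB_sB (a : ℕ) : sB a * sB a = 1 := by
  ext t
  rw [Equiv.Perm.mul_apply, Equiv.Perm.one_apply]
  have h1 := sB_apply a t
  have h2 := sB_apply a (sB a t)
  generalize sB a (sB a t) = z at *
  generalize sB a t = y at *
  split_ifs at h1 h2 <;> omega

theorem sB_odd (a : ℕ) : Odd' (sB a) := by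
  intro t
  simp only [sB_apply]
  split_ifs <;> omega

theorem Odd'.mul {u v : Equiv.Perm ℤ} (hu : Odd' u) (hv : Odd' v) : Odd' (u * v) := by
  intro i; simp [Equiv.Perm.mul_apply, hv i, hu (v i)]

def rho (w : Equiv.Perm ℤ) (a : ℕ) : ℤ × ℤ := rp (w⁻¹ ((a : ℤ) + 1)) (w⁻¹ (a : ℤ))

def Desc (w : Equiv.Perm ℤ) (a : ℕ) : Prop := w⁻¹ ((a : ℤ) + 1) < w⁻¹ (a : ℤ)

theorem sB_order {a : ℕ} (ha : a ≠ 0) (u v : ℤ) : sB a u < sB a v ↔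
    (u < v ∧ ¬ ((u = a ∧ v = a + 1) ∨ (u = -a - 1 ∧ v = -a))) ∨ (v = a ∧ u = a + 1) ∨ (v = -a - 1 ∧ u = -a) := by
  have h1 := sB_apply a u
  have h2 := sB_apply a v
  generalize sB a u = z at *
  generalize sB a v = y at *
  rw [if_neg ha] at h1 h2
  split_ifs at h1 h2 <;> omega

theorem inv_step {w : Equiv.Perm ℤ} (h : Odd' w) (a : ℕ) {I K : ℤ} (hI : w I = a + 1) (hK : w K = a)
    (hIK : I < K) {i k : ℤ} (hik : i < k) :
    sB a (w k) < sB a (w i) ↔ w k < w i ∧ rp i k ≠ rp I K := by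
  have e : ∀ s t : ℤ, w s = w t ↔ s = t := fun s t => w.injective.eq_iff
  have hI' := h I
  have hK' := h K
  have h0 := h.zero
  have i1 := e i I
  have i2 := e i K
  have i3 := e i (-I)
  have i4 := e i (-K)
  have i5 := e i 0
  have k1 := e k I
  have k2 := e k K
  have k3 := e k (-I)
  have k4 := e k (-K)
  have k5 := e k 0
  have k6 := e K 0
  rw [hI] at i1 k1
  rw [hK] at i2 k2 k6
  rw [hI', hI] at i3 k3
  rw [hK', hK] at i4 k4
  rw [h0] at i5 k5 k6
  by_cases ha : a = 0
  · simp only [sB_apply, rp]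
    subst ha
    have : K = 0 := by rw [← k6]; simp
    subst this
    simp only [if_true]
    split_ifs <;> simp only [ne_eq, Prod.mk.injEq] <;> omega
  · have := e I (-K)
    rw [hK', hI, hK] at this
    have h3 : I ≠ -K := by rw [ne_eq, ← this]; omega
    have hK0 : K ≠ 0 := by rw [ne_eq, ← k6]; omega
    have hI0 : I ≠ 0 := by rintro rfl; omega
    have hr : rp i k = rp I K ↔ (i = I ∧ k = K) ∨ (i = -K ∧ k = -I) := by
      unfold rp
      split_ifs <;> simp only [Prod.mk.injEq] <;> omega
    have hs := sB_order ha (w k) (w i)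
    rw [hs, ne_eq, hr]
    have n1 : ¬ (w i = a ∧ w k = a + 1) := by rw [i2, k1]; omega
    have n2 : ¬ (w i = -a - 1 ∧ w k = -a) := by
      rw [show (-(a:ℤ) - 1) = -(a + 1) by ring, i3, k4]; omega
    rw [← i1, ← k2, ← i4, ← k3]
    clear hr hs i1 i2 i3 i4 k1 k2 k3 k4 i5 k5 k6 e hI' hK' this
    rw [show (-((a:ℤ) + 1)) = -a - 1 by ring]
    tauto

theorem Desc.inv {w : Equiv.Perm ℤ} (h : Odd' w) {a : ℕ} (hd : Desc w a) {i k : ℤ} (hik : i < k) :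
    (sB a * w) k < (sB a * w) i ↔ w k < w i ∧ rp i k ≠ rho w a := by
  simp only [Equiv.Perm.mul_apply]
  exact inv_step h a (by simp) (by simp) hd hik

theorem Desc.mem_iff {w : Equiv.Perm ℤ} (h : Odd' w) {a : ℕ} (hd : Desc w a) (q : ℤ × ℤ) :
    q ∈ Rt (sB a * w) ↔ q ∈ Rt w ∧ q ≠ rho w a := by
  constructor
  · rintro ⟨h1, h2, h3⟩
    rw [hd.inv h h2, rp_self h1] at h3
    exact ⟨⟨h1, h2, h3.1⟩, h3.2⟩
  · rintro ⟨⟨h1, h2, h3⟩, h4⟩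
    refine ⟨h1, h2, ?_⟩
    rw [hd.inv h h2, rp_self h1]
    exact ⟨h3, h4⟩

theorem Desc.rho_mem {w : Equiv.Perm ℤ} (h : Odd' w) {a : ℕ} (hd : Desc w a) : rho w a ∈ Rt w := by
  unfold rho
  rw [rp_mem h hd]; simp

theorem Desc.insert {w : Equiv.Perm ℤ} (h : Odd' w) {a : ℕ} (hd : Desc w a) :
    Rt w = insert (rho w a) (Rt (sB a * w)) := by
  ext q
  rw [Set.mem_insert_iff, hd.mem_iff h]
  have := hd.rho_mem h
  by_cases hq : q = rho w a
  · simp [hq, this]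
  · simp [hq]

theorem desc_or (w : Equiv.Perm ℤ) (h : Odd' w) (a : ℕ) : Desc w a ∨ Desc (sB a * w) a := by
  have hs : (sB a)⁻¹ = sB a := inv_eq_of_mul_eq_one_left (sB_sB a)
  have e : ∀ t, (sB a * w)⁻¹ t = w⁻¹ (sB a t) := by
    intro t; rw [mul_inv_rev, hs]; rfl
  unfold Desc
  rw [e, e]
  have hi : Odd' w⁻¹ := by
    intro t
    apply w.injective
    rw [h]; simp
  have hne : w⁻¹ ((a:ℤ) + 1) ≠ w⁻¹ (a:ℤ) := by simp
  by_cases ha : a = 0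
  · subst ha
    have e1 : sB 0 1 = -1 := by simp [sB_apply]
    have e2 : sB 0 0 = 0 := by simp [sB_apply]
    simp only [Nat.cast_zero, zero_add] at hne ⊢
    rw [e1, e2, hi 1, hi.zero] 
    rw [hi.zero] at hne
    omega
  · have e1 : sB a ((a:ℤ) + 1) = a := by simp [sB_apply, ha]
    have e2 : sB a a = a + 1 := by simp [sB_apply, ha]
    rw [e1, e2]; omega

theorem rho_abs {w : Equiv.Perm ℤ} (h : Odd' w) (a : ℕ) :
    max |w (rho w a).1| |w (rho w a).2| = a + 1 := by
  have hI : w (w⁻¹ ((a:ℤ) + 1)) = a + 1 := by simp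
  have hK : w (w⁻¹ (a:ℤ)) = a := by simp
  unfold rho
  generalize w⁻¹ ((a:ℤ) + 1) = I at *
  generalize w⁻¹ (a:ℤ) = K at *
  have hI' := h I
  have hK' := h K
  unfold rp
  split_ifs with c1 c2
  · simp only [hI, hK]; rw [abs_of_nonneg (by omega), abs_of_nonneg (by omega)]; omega
  · simp only [hI', hK', hI, hK, abs_neg]; rw [abs_of_nonneg (by omega), abs_of_nonneg (by omega)]; omega
  · have : I = -K := by omega
    rw [this, hK'] at hI
    omega

theorem rho_inj {w : Equiv.Perm ℤ} (h : Odd' w) {a b : ℕ} (e : rho w a = rho w b) : a = b := by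
  have h1 := rho_abs h a
  have h2 := rho_abs h b
  rw [e, h2] at h1
  omega

theorem bound_of_signed {n : ℕ} {w : Equiv.Perm ℤ} (hw : IsSignedPerm n w) {t : ℤ} (ht : |t| ≤ n) : |w t| ≤ n := by
  by_contra! hc
  have := hw.2 _ hc
  have := w.injective this
  rw [this] at hc
  omega

/-- adjacency gives a descent -/
theorem desc_of_adj {n : ℕ} {w : Equiv.Perm ℤ} (hw : IsSignedPerm n w) {i k : ℤ} (hik : i < k)
    (hadj : w i = w k + 1) : ∃ a : ℕ, a < n ∧ Desc w a ∧ rho w a = rp i k := by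
  have h : Odd' w := hw.1
  have hk : |k| ≤ n ∨ |i| ≤ n := by
    by_contra! hc
    have h1 := hw.2 _ hc.1
    have h2 := hw.2 _ hc.2
    omega
  have hki : w k ≤ n - 1 ∧ - (n:ℤ) ≤ w k := by
    have b1 : |w k| ≤ n → |w i| ≤ n := by
      intro hb
      by_contra! hc
      have h2 := hw.2 _ hc
      have := w.injective h2
      rw [this] at hc
      rw [this] at hadj
      rw [abs_le] at hb
      rw [lt_abs] at hc
      by_cases ck : |k| ≤ n
      · rw [abs_le] at ck; omega
      · push Not at ck
        have := hw.2 _ ck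
        omega
    have b2 : |w i| ≤ n → |w k| ≤ n := by
      intro hb
      by_contra! hc
      have h2 := hw.2 _ hc
      have := w.injective h2
      rw [this] at hc
      rw [this] at hadj
      rw [abs_le] at hb
      rw [lt_abs] at hc
      by_cases ck : |i| ≤ n
      · rw [abs_le] at ck; omega
      · push Not at ck
        have := hw.2 _ ck
        omega
    have : |w k| ≤ n ∧ |w i| ≤ n := by
      rcases hk with c | c
      · exact ⟨bound_of_signed hw c, b1 (bound_of_signed hw c)⟩
      · exact ⟨b2 (bound_of_signed hw c), bound_of_signed hw c⟩
    rw [abs_le, abs_le] at this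
    omega
  by_cases c : 0 ≤ w k
  · refine ⟨(w k).toNat, by omega, ?_, ?_⟩
    · unfold Desc
      rw [Int.toNat_of_nonneg c, ← hadj]; simpa using hik
    · unfold rho
      rw [Int.toNat_of_nonneg c, ← hadj]; simp
  · have e1 : w⁻¹ (-(w k)) = -k := by rw [← h k]; simp
    have e2 : w⁻¹ (-(w i)) = -i := by rw [← h i]; simp
    have hc : 0 ≤ -(w i) := by omega
    have e3 : -(w i) + 1 = -(w k) := by omega
    refine ⟨(-(w i)).toNat, by omega, ?_, ?_⟩
    · unfold Desc
      rw [Int.toNat_of_nonneg hc, e3, e1, e2]; omega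
    · unfold rho
      rw [Int.toNat_of_nonneg hc, e3, e1, e2, rp_neg']

theorem sB_signed {n a : ℕ} (ha : a < n) : IsSignedPerm n (sB a) := by
  refine ⟨sB_odd a, fun i hi => ?_⟩
  rw [lt_abs] at hi
  rw [sB_apply]
  split_ifs <;> omega

theorem signed_mul {n : ℕ} {u v : Equiv.Perm ℤ} (hu : IsSignedPerm n u) (hv : IsSignedPerm n v) :
    IsSignedPerm n (u * v) := by
  refine ⟨Odd'.mul hu.1 hv.1, fun i hi => ?_⟩
  rw [Equiv.Perm.mul_apply, hv.2 i hi, hu.2 i hi]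

theorem wordProd_cons (a : ℕ) (L : List ℕ) : wordProd (a :: L) = sB a * wordProd L := by
  simp [wordProd]

theorem wordProd_odd (L : List ℕ) : Odd' (wordProd L) := by
  induction L with
  | nil => intro i; simp [wordProd]
  | cons a L ih => rw [wordProd_cons]; exact (sB_odd a).mul ih

theorem sB_cancel (a : ℕ) (w : Equiv.Perm ℤ) : sB a * (sB a * w) = w := by
  rw [← mul_assoc, sB_sB, one_mul]

theorem Rt_one : Rt 1 = ∅ := by
  ext q; simp only [Rt, Set.mem_ofPred_eq, Equiv.Perm.one_apply, Set.mem_empty_iff_false, iff_false]; omega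

theorem word_len (L : List ℕ) : (Rt (wordProd L)).Finite ∧ (Rt (wordProd L)).ncard ≤ L.length := by
  induction L with
  | nil => simp [wordProd, Rt_one]
  | cons a L ih =>
    rw [wordProd_cons]
    have ho := wordProd_odd L
    rcases desc_or _ ho a with c | c
    · have hi := c.insert ho
      have hsub : Rt (sB a * wordProd L) ⊆ Rt (wordProd L) := by rw [hi]; exact Set.subset_insert _ _
      refine ⟨ih.1.subset hsub, ?_⟩
      have := Set.ncard_le_ncard hsub ih.1
      simp; omega
    · have hi := c.insert ((sB_odd a).mul ho)
      rw [sB_cancel] at hi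
      rw [hi]
      refine ⟨ih.1.insert _, ?_⟩
      have := Set.ncard_insert_le (rho (sB a * wordProd L) a) (Rt (wordProd L))
      simp; omega

/-- Good cons -/
theorem good_cons {a : ℕ} {L : List ℕ} (hg : (Rt (wordProd (a :: L))).ncard = (a :: L).length) :
    Desc (wordProd (a :: L)) a ∧ (Rt (wordProd L)).ncard = L.length := by
  rw [wordProd_cons] at *
  have ho := wordProd_odd L
  have ih := word_len L
  simp only [List.length_cons] at hg
  rcases desc_or _ ho a with c | c
  · exfalso
    have hi := c.insert ho
    have hsub : Rt (sB a * wordProd L) ⊆ Rt (wordProd L) := by rw [hi]; exact Set.subset_insert _ _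
    have := Set.ncard_le_ncard hsub ih.1
    omega
  · refine ⟨c, ?_⟩
    have hi := c.insert ((sB_odd a).mul ho)
    rw [sB_cancel] at hi
    have := Set.ncard_insert_le (rho (sB a * wordProd L) a) (Rt (wordProd L))
    rw [← hi] at this
    omega

theorem exists_adj {w : Equiv.Perm ℤ} : ∀ n : ℕ, ∀ i k : ℤ, i < k → w k < w i → w i ≤ w k + n →
    ∃ i k : ℤ, i < k ∧ w i = w k + 1 := by
  intro n
  induction n with
  | zero => intro i k _ _ _; simp at *; omega
  | succ n ih =>
    intro i k h1 h2 h3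
    push_cast at h3
    by_cases hc : w i = w k + 1
    · exact ⟨i, k, h1, hc⟩
    obtain ⟨m, hm⟩ := w.surjective (w k + 1)
    by_cases c : m < k
    · exact ⟨m, k, c, hm⟩
    · exact ih i m (by omega) (by omega) (by omega)

theorem eq_one_of_empty {w : Equiv.Perm ℤ} (h : Odd' w) (he : Rt w = ∅) : w = 1 := by
  have hmono : StrictMono w := by
    intro i k hik
    have := rp_mem h hik
    rw [he] at this
    simp at this
    exact lt_of_le_of_ne this (fun e => by have := w.injective e; omega)
  have step : ∀ t, w (t + 1) = w t + 1 := by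
    intro t
    obtain ⟨m, hm⟩ := w.surjective (w t + 1)
    have h1 : t < m := by rw [← hmono.lt_iff_lt]; omega
    have h2 : m ≤ t + 1 := by rw [← hmono.le_iff_le]; have := hmono (show t < t + 1 by omega); omega
    have : m = t + 1 := by omega
    rw [← this, hm]
  have hn : ∀ n : ℕ, w n = n := by
    intro n
    induction n with
    | zero => simpa using h.zero
    | succ n ih => push_cast; rw [step, ih]
  ext t
  rcases Int.eq_nat_or_neg t with ⟨n, rfl | rfl⟩
  · simp [hn]
  · rw [h, hn]; simp

theorem exists_word {n : ℕ} : ∀ N : ℕ, ∀ w : Equiv.Perm ℤ, IsSignedPerm n w → (Rt w).Finite → (Rt w).ncard = N →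
    ∃ L : List ℕ, (∀ a ∈ L, a < n) ∧ wordProd L = w ∧ L.length = N := by
  intro N
  induction N with
  | zero =>
    intro w hw hf h0
    refine ⟨[], by simp, ?_, rfl⟩
    rw [Set.ncard_eq_zero hf] at h0
    rw [eq_one_of_empty hw.1 h0]; simp [wordProd]
  | succ N ih =>
    intro w hw hf hN
    have hne : (Rt w).Nonempty := by
      rw [← Set.ncard_pos hf]; omega
    obtain ⟨q, h1, h2, h3⟩ := hne
    obtain ⟨i, k, hik, hadj⟩ := exists_adj (w := w) (w q.1 - w q.2).toNat q.1 q.2 h2 h3 (by omega)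
    obtain ⟨a, han, hd, -⟩ := desc_of_adj hw hik hadj
    have hi := hd.insert hw.1
    have hf' : (Rt (sB a * w)).Finite := hf.subset (by rw [hi]; exact Set.subset_insert _ _)
    have hnm : rho w a ∉ Rt (sB a * w) := by rw [hd.mem_iff hw.1]; simp
    rw [hi, Set.ncard_insert_of_notMem hnm hf'] at hN
    obtain ⟨L, g1, g2, g3⟩ := ih (sB a * w) (signed_mul (sB_signed han) hw) hf' (by omega)
    refine ⟨a :: L, by simpa using ⟨han, g1⟩, ?_, by simp [g3]⟩
    rw [wordProd_cons, g2, sB_cancel]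

theorem reduced_iff {n : ℕ} {w : Equiv.Perm ℤ} (hw : IsSignedPerm n w) (hf : (Rt w).Finite) (L : List ℕ) :
    IsReducedWord n w L ↔ (∀ a ∈ L, a < n) ∧ wordProd L = w ∧ L.length = (Rt w).ncard := by
  have : lengthB n w = (Rt w).ncard := by
    unfold lengthB
    apply le_antisymm
    · apply Nat.sInf_le
      exact exists_word _ w hw hf rfl
    · apply le_csInf
      · exact ⟨_, exists_word _ w hw hf rfl⟩
      · rintro m ⟨L, -, h2, h3⟩
        have := (word_len L).2
        rw [h2, h3] at this
        exact this
  unfold IsReducedWord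
  rw [this]
theorem tm_step {w : Equiv.Perm ℤ} (h : Odd' w) {a : ℕ} (hd : Desc w a) {N : ℕ} {f g : ℤ × ℤ → ℕ}
    (hfg : ∀ q, q ≠ rho w a → f q = g q) (hf : f (rho w a) = N + 1) {i k j : ℤ} (h1 : i < j) (h2 : j < k)
    (hne : rp i k ≠ rho w a) (hle : f (rp i k) ≤ N + 1) : tm w f i k j = tm (sB a * w) g i k j := by
  have key : ∀ s t : ℤ, s < t → ((w t < w s ∧ f (rp s t) < f (rp i k)) ↔
      ((sB a * w) t < (sB a * w) s ∧ g (rp s t) < g (rp i k))) := by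
    intro s t hst
    rw [hd.inv h hst, ← hfg _ hne]
    by_cases c : rp s t = rho w a
    · rw [c, hf]
      simp; omega
    · rw [hfg _ c]
      simp [c]
  unfold tm
  simp only [key _ _ h1, key _ _ h2]

theorem rho_adj {w : Equiv.Perm ℤ} (h : Odd' w) {a : ℕ} (hd : Desc w a) :
    w (rho w a).1 = w (rho w a).2 + 1 := by
  have hI : w (w⁻¹ ((a:ℤ) + 1)) = a + 1 := by simp
  have hK : w (w⁻¹ (a:ℤ)) = a := by simp
  unfold Desc at hd
  unfold rho
  generalize w⁻¹ ((a:ℤ) + 1) = I at *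
  generalize w⁻¹ (a:ℤ) = K at *
  have hI' := h I
  have hK' := h K
  unfold rp
  split_ifs with c1 c2
  · simp only [hI, hK]
  · simp only [hI', hK', hI, hK]; omega
  · have : I = -K := by omega
    rw [this, hK'] at hI
    omega

theorem bal_down {w : Equiv.Perm ℤ} (h : Odd' w) {a : ℕ} (hd : Desc w a) {N : ℕ} {f : ℤ × ℤ → ℕ}
    (hb : BalF w (N + 1) f) (hf : f (rho w a) = N + 1) :
    BalF (sB a * w) N (Function.update f (rho w a) 0) := by
  have hρ := hd.rho_mem h
  have hfg : ∀ q, q ≠ rho w a → f q = Function.update f (rho w a) 0 q := by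
    intro q hq; rw [Function.update_of_ne hq]
  refine ⟨⟨?_, ?_, ?_⟩, ?_, ?_⟩
  · intro q hq
    rw [hd.mem_iff h] at hq
    rw [← hfg q hq.2]
    have h1 := hb.1.mapsTo hq.1
    have : f q ≠ N + 1 := fun e => hq.2 (hb.1.injOn hq.1 hρ (by rw [e, hf]))
    simp only [Set.mem_Icc] at h1 ⊢
    omega
  · intro q hq q' hq' e
    rw [hd.mem_iff h] at hq hq'
    rw [← hfg q hq.2, ← hfg q' hq'.2] at e
    exact hb.1.injOn hq.1 hq'.1 e
  · intro m hm
    simp only [Set.mem_Icc] at hm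
    obtain ⟨q, hq, e⟩ := hb.1.surjOn (show m ∈ Set.Icc 1 (N + 1) by simp only [Set.mem_Icc]; omega)
    have : q ≠ rho w a := by rintro rfl; omega
    exact ⟨q, by rw [hd.mem_iff h]; exact ⟨hq, this⟩, by rw [← hfg q this, e]⟩
  · intro q hq
    by_cases c : q = rho w a
    · simp [c]
    · rw [← hfg q c]
      apply hb.2.1
      intro hq'
      exact hq ((hd.mem_iff h q).2 ⟨hq', c⟩)
  · intro q hq
    rw [hd.mem_iff h] at hq
    rw [← hb.2.2 q hq.1]
    refine Finset.sum_congr rfl fun j hj => ?_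
    simp only [Finset.mem_Ioo] at hj
    symm
    apply tm_step h hd hfg hf hj.1 hj.2
    · rw [rp_self hq.1.1]; exact hq.2
    · rw [rp_self hq.1.1]; exact (hb.1.mapsTo hq.1).2

theorem bal_up {w : Equiv.Perm ℤ} (h : Odd' w) {a : ℕ} (hd : Desc w a) {N : ℕ} {g : ℤ × ℤ → ℕ}
    (hb : BalF (sB a * w) N g) :
    BalF w (N + 1) (Function.update g (rho w a) (N + 1)) := by
  have hρ := hd.rho_mem h
  set f := Function.update g (rho w a) (N + 1) with hfdef
  have hfg : ∀ q, q ≠ rho w a → f q = g q := by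
    intro q hq; rw [hfdef, Function.update_of_ne hq]
  have hf : f (rho w a) = N + 1 := by simp [hfdef]
  have hle : ∀ q ∈ Rt w, q ≠ rho w a → 1 ≤ f q ∧ f q ≤ N := by
    intro q hq hne
    rw [hfg q hne]
    exact hb.1.mapsTo ((hd.mem_iff h q).2 ⟨hq, hne⟩)
  refine ⟨⟨?_, ?_, ?_⟩, ?_, ?_⟩
  · intro q hq
    simp only [Set.mem_Icc]
    by_cases c : q = rho w a
    · rw [c, hf]; omega
    · have := hle q hq c; omega
  · intro q hq q' hq' e
    by_cases c : q = rho w a <;> by_cases c' : q' = rho w a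
    · rw [c, c']
    · have := hle q' hq' c'; rw [c, hf] at e; omega
    · have := hle q hq c; rw [c', hf] at e; omega
    · rw [hfg q c, hfg q' c'] at e
      exact hb.1.injOn ((hd.mem_iff h q).2 ⟨hq, c⟩) ((hd.mem_iff h q').2 ⟨hq', c'⟩) e
  · intro m hm
    simp only [Set.mem_Icc] at hm
    by_cases c : m = N + 1
    · exact ⟨_, hρ, by rw [hf, c]⟩
    · obtain ⟨q, hq, e⟩ := hb.1.surjOn (show m ∈ Set.Icc 1 N by simp only [Set.mem_Icc]; omega)
      rw [hd.mem_iff h] at hq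
      exact ⟨q, hq.1, by rw [hfg q hq.2, e]⟩
  · intro q hq
    have c : q ≠ rho w a := by rintro rfl; exact hq hρ
    rw [hfg q c]
    apply hb.2.1
    rw [hd.mem_iff h]; tauto
  · intro q hq
    by_cases c : q = rho w a
    · have hadj := rho_adj h hd
      rw [Finset.card_eq_sum_ones]
      refine Finset.sum_congr rfl fun j hj => ?_
      simp only [Finset.mem_Ioo] at hj
      rw [← c] at hadj
      have hrs := rp_self hq.1
      obtain ⟨x, y⟩ := q
      simp only at *
      have hxy := hq.1
      simp only at hxy
      have k1 : w y < w j → f (rp j y) < f (rp x y) := by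
        intro h3
        rw [hrs, c, hf]
        have := hle _ ((rp_mem h hj.2).2 h3) (by
          rw [← c]; unfold rp; rw [if_pos (by omega)]; simp; omega)
        omega
      have k2 : w j < w x → f (rp x j) < f (rp x y) := by
        intro h3
        rw [hrs, c, hf]
        have := hle _ ((rp_mem h hj.1).2 h3) (by
          rw [← c]; unfold rp; split_ifs <;> simp <;> omega)
        omega
      have n1 : w j ≠ w x := fun e => by have := w.injective e; omega
      have n2 : w j ≠ w y := fun e => by have := w.injective e; omega
      unfold tm
      split_ifs <;> omega
    · rw [← hb.2.2 q ((hd.mem_iff h q).2 ⟨hq, c⟩)]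
      refine Finset.sum_congr rfl fun j hj => ?_
      simp only [Finset.mem_Ioo] at hj
      apply tm_step h hd hfg hf hj.1 hj.2
      · rw [rp_self hq.1]; exact c
      · rw [rp_self hq.1]; have := hle q hq c; omega

def Gf : List ℕ → (ℤ × ℤ → ℕ)
  | [] => fun _ => 0
  | a :: L => Function.update (Gf L) (rho (wordProd (a :: L)) a) (L.length + 1)

theorem Gf_bal (L : List ℕ) (hg : (Rt (wordProd L)).ncard = L.length) :
    BalF (wordProd L) L.length (Gf L) := by
  induction L with
  | nil =>
    have : wordProd [] = 1 := by simp [wordProd]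
    rw [this]
    refine ⟨?_, ?_, ?_⟩
    · rw [Rt_one]; simp
    · intro q _; rfl
    · rw [Rt_one]; simp
  | cons a L ih =>
    obtain ⟨hd, h2⟩ := good_cons hg
    have := ih h2
    apply bal_up (wordProd_odd _) hd
    rw [wordProd_cons, sB_cancel]
    exact this

theorem Gf_inj : ∀ (L L' : List ℕ), (Rt (wordProd L)).ncard = L.length → (Rt (wordProd L')).ncard = L'.length →
    wordProd L = wordProd L' → Gf L = Gf L' → L = L' := by
  intro L
  induction L with
  | nil =>
    intro L' h1 h2 h3 _
    rw [← h3, h1] at h2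
    exact (List.length_eq_zero_iff.1 h2.symm).symm
  | cons a L ih =>
    intro L' h1 h2 h3 h4
    cases L' with
    | nil =>
      rw [h3, h2] at h1
      simp at h1
    | cons b L' =>
      have hlen : L.length = L'.length := by
        rw [h3, h2] at h1
        simpa using h1.symm
      obtain ⟨hd, g1⟩ := good_cons h1
      obtain ⟨hd', g2⟩ := good_cons h2
      have e1 : Gf (a :: L) (rho (wordProd (a :: L)) a) = L.length + 1 := by simp [Gf]
      have e2 : Gf (a :: L) (rho (wordProd (a :: L)) b) = L.length + 1 := by rw [h4, h3]; simp [Gf, hlen]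
      have hb := Gf_bal _ h1
      have ho := wordProd_odd (a :: L)
      rw [← h3] at hd'
      have hab : a = b := rho_inj ho (hb.1.injOn (hd.rho_mem ho) (hd'.rho_mem ho) (by rw [e1, e2]))
      subst hab
      congr 1
      apply ih L' g1 g2
      · rw [wordProd_cons, wordProd_cons] at h3
        exact mul_left_cancel h3
      · have hw' : wordProd L = sB a * wordProd (a :: L) := by rw [wordProd_cons, sB_cancel]
        have hw'' : wordProd L' = sB a * wordProd (a :: L) := by rw [h3, wordProd_cons, sB_cancel]
        have z1 : Gf L (rho (wordProd (a :: L)) a) = 0 := by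
          apply (Gf_bal L g1).2.1
          rw [hw', hd.mem_iff ho]; simp
        have z2 : Gf L' (rho (wordProd (a :: L)) a) = 0 := by
          apply (Gf_bal L' g2).2.1
          rw [hw'', hd.mem_iff ho]; simp
        funext q
        by_cases c : q = rho (wordProd (a :: L)) a
        · rw [c, z1, z2]
        · have := congrFun h4 q
          simp only [Gf] at this
          rw [← h3, Function.update_of_ne c, Function.update_of_ne c] at this
          exact this

theorem Gf_surj {n : ℕ} : ∀ (N : ℕ) (w : Equiv.Perm ℤ) (f : ℤ × ℤ → ℕ), IsSignedPerm n w → BalF w N f →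
    ∃ L : List ℕ, (∀ a ∈ L, a < n) ∧ wordProd L = w ∧ L.length = N ∧ Gf L = f := by
  intro N
  induction N with
  | zero =>
    intro w f hw hb
    have he : Rt w = ∅ := by
      ext q
      simp only [Set.mem_empty_iff_false, iff_false]
      intro hq
      have := hb.1.mapsTo hq
      simp at this
    refine ⟨[], by simp, ?_, rfl, ?_⟩
    · rw [eq_one_of_empty hw.1 he]; simp [wordProd]
    · funext q
      rw [hb.2.1 q (by simp [he])]; rfl
  | succ N ih =>
    intro w f hw hb
    obtain ⟨q, hq, e⟩ := hb.1.surjOn (show N + 1 ∈ Set.Icc 1 (N + 1) by simp)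
    obtain ⟨a, ha, hd, hr⟩ := desc_of_adj hw hq.2.1 (adj_of_max hw.1 hb hq e)
    rw [rp_self hq.1] at hr
    rw [← hr] at e
    obtain ⟨L, g1, g2, g3, g4⟩ := ih (sB a * w) _ (signed_mul (sB_signed ha) hw) (bal_down hw.1 hd hb e)
    have hw' : wordProd (a :: L) = w := by rw [wordProd_cons, g2, sB_cancel]
    refine ⟨a :: L, by simpa using ⟨ha, g1⟩, hw', by simp [g3], ?_⟩
    simp only [Gf, hw', g4, g3]
    rw [Function.update_idem, ← e, Function.update_eq_self]

theorem card_bal_eq_red {n : ℕ} {w : Equiv.Perm ℤ} (hw : IsSignedPerm n w) (hf : (Rt w).Finite) :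
    Nat.card {f : ℤ × ℤ → ℕ // BalF w (Rt w).ncard f} = Nat.card {L : List ℕ // IsReducedWord n w L} := by
  symm
  refine Nat.card_eq_of_bijective
    (fun L => ⟨Gf L.1, ?_⟩) ⟨?_, ?_⟩
  · obtain ⟨L, hL⟩ := L
    rw [reduced_iff hw hf] at hL
    obtain ⟨-, h2, h3⟩ := hL
    have := Gf_bal L (by rw [h2, h3])
    rwa [h2, h3] at this
  · rintro ⟨L, hL⟩ ⟨L', hL'⟩ e
    rw [reduced_iff hw hf] at hL hL'
    simp only [Subtype.mk.injEq] at e ⊢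
    exact Gf_inj L L' (by rw [hL.2.1, hL.2.2]) (by rw [hL'.2.1, hL'.2.2]) (by rw [hL.2.1, hL'.2.1]) e
  · rintro ⟨f, hb⟩
    obtain ⟨L, g1, g2, g3, g4⟩ := Gf_surj _ w f hw hb
    exact ⟨⟨L, (reduced_iff hw hf L).2 ⟨g1, g2, g3⟩⟩, Subtype.ext g4⟩
theorem mem_D {d r : ℕ} (p : ℤ × ℤ) : p ∈ Diagram d (Zlam d r) ↔
    1 ≤ p.1 ∧ p.1 ≤ d ∧ p.1 - d ≤ p.2 ∧ p.2 ≤ r + d - p.1 := by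
  unfold Diagram Zlam
  simp only [Set.mem_ofPred_eq]
  omega

theorem mem_RtW {d r : ℕ} {w : Equiv.Perm ℤ} (hw : IsWdr d r w) (q : ℤ × ℤ) : q ∈ Rt w ↔
    (r : ℤ) < q.2 ∧ q.2 ≤ d + r ∧ q.1 < q.2 ∧ (0 ≤ q.1 ∨ (-q.2 < q.1 ∧ q.1 < -r)) := by
  obtain ⟨x, y⟩ := q
  have h : Odd' w := hw.1.1
  have v1 : ∀ t : ℤ, 1 ≤ t → t ≤ r → w t = d + t := hw.2.1
  have v2 : ∀ t : ℤ, (r:ℤ) < t → t ≤ d + r → w t = -(t - r) := hw.2.2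
  have v3 : ∀ t : ℤ, (d:ℤ) + r < t → w t = t := by
    intro t ht
    apply hw.1.2
    rw [lt_abs]; push_cast; omega
  have v0 := h.zero
  have a1 := v1 y
  have a2 := v2 y
  have a3 := v3 y
  have b1 := v1 x
  have b2 := v2 x
  have b3 := v3 x
  have c1 := v1 (-x)
  have c2 := v2 (-x)
  have c3 := v3 (-x)
  rw [h x] at c1 c2 c3
  have b0 : x = 0 → w x = 0 := by rintro rfl; exact v0
  unfold Rt
  simp only [Set.mem_ofPred_eq]
  constructor
  · rintro ⟨h1, h2, h3⟩
    omega
  · rintro ⟨h1, h2, h3, h4⟩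
    refine ⟨?_, ?_, ?_⟩ <;> omega

theorem ncard_D (d : ℕ) (lam : ℕ → ℕ) : (Diagram d lam).Finite ∧ (Diagram d lam).ncard = sizeP d lam := by
  set S := (Finset.Icc 1 d).sigma (fun i => Finset.range (lam i)) with hS
  set e : (Σ _ : ℕ, ℕ) → ℤ × ℤ := fun s => ((s.1 : ℤ), (s.2 : ℤ) + s.1 - d) with he
  have hD : Diagram d lam = e '' (S : Set (Σ _ : ℕ, ℕ)) := by
    ext ⟨i, c⟩
    simp only [Diagram, Set.mem_ofPred_eq, Set.mem_image, Finset.mem_coe, hS, Finset.mem_sigma, Finset.mem_Icc,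
      Finset.mem_range, he, Prod.mk.injEq]
    constructor
    · rintro ⟨h1, h2, h3, h4⟩
      exact ⟨⟨i.toNat, (c + d - i).toNat⟩, ⟨by simp only; omega, by simp only; omega⟩, by simp only; omega, by simp only; omega⟩
    · rintro ⟨⟨a, b⟩, ⟨h1, h2⟩, h3, h4⟩
      simp only at *
      have : i.toNat = a := by omega
      rw [this]
      omega
  have hinj : Set.InjOn e (S : Set (Σ _ : ℕ, ℕ)) := by
    rintro ⟨a, b⟩ - ⟨a', b'⟩ - h
    simp only [he, Prod.mk.injEq] at h
    have h1 : a = a' := by omega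
    subst h1
    have h2 : b = b' := by omega
    rw [h2]
  rw [hD]
  refine ⟨S.finite_toSet.image _, ?_⟩
  rw [hinj.ncard_image, Set.ncard_coe_finset, hS, Finset.card_sigma]
  simp [sizeP]

def phi (d r : ℕ) (p : ℤ × ℤ) : ℤ × ℤ := (if p.2 < 0 then p.2 - r else p.2, d + r + 1 - p.1)

def psi (d r : ℕ) (q : ℤ × ℤ) : ℤ × ℤ := (d + r + 1 - q.2, if q.1 < 0 then q.1 + r else q.1)

theorem phi_bij {d r : ℕ} {w : Equiv.Perm ℤ} (hw : IsWdr d r w) :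
    Set.BijOn (phi d r) (Diagram d (Zlam d r)) (Rt w) ∧ Set.InvOn (psi d r) (phi d r) (Diagram d (Zlam d r)) (Rt w)
      ∧ Set.MapsTo (psi d r) (Rt w) (Diagram d (Zlam d r)) := by
  have h1 : Set.MapsTo (phi d r) (Diagram d (Zlam d r)) (Rt w) := by
    intro p hp
    rw [mem_D] at hp
    rw [mem_RtW hw]
    simp only [phi]
    split_ifs <;> omega
  have h2 : Set.MapsTo (psi d r) (Rt w) (Diagram d (Zlam d r)) := by
    intro p hp
    rw [mem_RtW hw] at hp
    rw [mem_D]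
    simp only [psi]
    split_ifs <;> omega
  have h3 : Set.InvOn (psi d r) (phi d r) (Diagram d (Zlam d r)) (Rt w) := by
    constructor
    · rintro ⟨i, c⟩ hp
      simp only [psi, phi, Prod.mk.injEq]
      split_ifs <;> omega
    · rintro ⟨i, c⟩ hp
      rw [mem_RtW hw] at hp
      simp only at hp
      simp only [psi, phi, Prod.mk.injEq]
      split_ifs <;> omega
  exact ⟨h3.bijOn h1 h2, h3, h2⟩

theorem ncard_RtW {d r : ℕ} {w : Equiv.Perm ℤ} (hw : IsWdr d r w) :
    (Rt w).Finite ∧ (Rt w).ncard = sizeP d (Zlam d r) := by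
  obtain ⟨h1, -, -⟩ := phi_bij hw
  obtain ⟨f1, f2⟩ := ncard_D d (Zlam d r)
  rw [← h1.image_eq, h1.injOn.ncard_image]
  exact ⟨f1.image _, f2⟩

theorem psi_inj {d r : ℕ} {q q' : ℤ × ℤ} (h1 : 0 ≤ q.1 ∨ q.1 < -r) (h2 : 0 ≤ q'.1 ∨ q'.1 < -r)
    (h : psi d r q = psi d r q') : q = q' := by
  obtain ⟨x, y⟩ := q
  obtain ⟨x', y'⟩ := q'
  simp only [psi, Prod.mk.injEq] at *
  split_ifs at h <;> omega

def er (x j : ℤ) : ℤ × ℤ := if x + j < 0 then (-j, -x) else (x, j)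

theorem rp_er (x j : ℤ) : rp (er x j).1 (er x j).2 = rp x j := by
  unfold er
  split_ifs
  · exact rp_neg'
  · rfl

theorem hook_count {d r : ℕ} {w : Equiv.Perm ℤ} (hw : IsWdr d r w) {f B : ℤ × ℤ → ℕ} {N : ℕ}
    (rel : ∀ p ∈ Diagram d (Zlam d r), f (phi d r p) + B p = N + 1) {p : ℤ × ℤ}
    (hp : p ∈ Diagram d (Zlam d r)) :
    {q ∈ ExtHook d (Zlam d r) p.1 p.2 | B p < ExtFilling d B q}.ncard =
      ∑ j ∈ Finset.Ioo (phi d r p).1 (phi d r p).2, tm w f (phi d r p).1 (phi d r p).2 j := by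
  have h : Odd' w := hw.1.1
  obtain ⟨hbij, hinv, hmap⟩ := phi_bij hw
  have hq := hbij.mapsTo hp
  have hpsi : psi d r (phi d r p) = p := hinv.1 hp
  have hrel0 := rel p hp
  obtain ⟨x, y, hqd⟩ : ∃ x y, phi d r p = (x, y) := ⟨_, _, rfl⟩
  rw [hqd] at hq hpsi hrel0 ⊢
  simp only
  have hrp : rp x y = (x, y) := rp_self (q := (x, y)) hq.1
  have hxy : -y < x ∧ x < y := ⟨hq.1, hq.2.1⟩
  have hq2 := (mem_RtW hw _).1 hq
  simp only at hq2
  have hpc : p = (d + r + 1 - y, if x < 0 then x + r else x) := by rw [← hpsi]; rfl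
  -- value lemmas
  have val1 : ∀ q ∈ Rt w, f q + ExtFilling d B (psi d r q) = N + 1 ∧ psi d r q ∈ Diagram d (Zlam d r) := by
    intro q hq
    have hm := hmap hq
    have := rel _ hm
    rw [hinv.2 hq] at this
    refine ⟨?_, hm⟩
    unfold ExtFilling
    rw [mem_D] at hm
    rw [if_neg (by omega)]
    exact this
  have val2 : ∀ j, (0, j) ∈ Rt w → f (0, j) + ExtFilling d B (psi d r (-j, j)) = N + 1 := by
    intro j hj
    have hm := hmap hj
    have := rel _ hm
    rw [hinv.2 hj] at this
    rw [mem_RtW hw] at hj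
    simp only at hj
    have e : psi d r (-j, j) = (d + r + 1 - j, -j + r) := by
      unfold psi; simp; omega
    have e' : psi d r (0, j) = (d + r + 1 - j, 0) := by unfold psi; simp
    rw [e'] at this
    rw [e]
    unfold ExtFilling
    simp only
    rw [if_pos (by omega)]
    exact this
  have val3 : ∀ j, x < j → w j < w x → f (rp x j) + ExtFilling d B (psi d r (er x j)) = N + 1 := by
    intro j hj hwj
    have hm := (rp_mem h hj).2 hwj
    rcases lt_trichotomy (x + j) 0 with c | c | c
    · have e : rp x j = er x j := by unfold rp er; rw [if_neg (by omega), if_pos c, if_pos c]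
      rw [e] at hm ⊢
      exact (val1 _ hm).1
    · have e : rp x j = (0, j) := by unfold rp; rw [if_neg (by omega), if_neg (by omega)]
      have e' : er x j = (-j, j) := by unfold er; rw [if_neg (by omega)]; simp; omega
      rw [e] at hm ⊢
      rw [e']
      exact val2 _ hm
    · have e : rp x j = er x j := by unfold rp er; rw [if_pos (by omega), if_neg (by omega)]
      rw [e] at hm ⊢
      exact (val1 _ hm).1
  set A := (Finset.Ioo x y).filter (fun j => w y < w j ∧ f (rp j y) < f (rp x y)) with hA
  set C := (Finset.Ioo x y).filter (fun j => w j < w x ∧ f (rp x j) < f (rp x y)) with hC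
  have hsum : ∑ j ∈ Finset.Ioo x y, tm w f x y j = A.card + C.card := by
    unfold tm
    rw [Finset.sum_add_distrib, Finset.card_filter, Finset.card_filter]
  rw [hsum]
  have memC : ∀ j, x < j → j < y → (w j < w x ↔ (x < -r ∧ (j ≤ 0 ∨ r < j)) ∨ (0 ≤ x ∧ r < j)) := by
    intro j h1 h2
    rw [← rp_mem h h1, mem_RtW hw]
    unfold rp
    split_ifs <;> simp only <;> omega
  have memA : ∀ j, x < j → j < y → (w y < w j ↔ 0 ≤ j ∨ j < -r) := by
    intro j h1 h2
    rw [← rp_mem h h2, mem_RtW hw]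
    unfold rp
    rw [if_pos (by omega)]
    simp only; omega
  have hS : {q ∈ ExtHook d (Zlam d r) p.1 p.2 | B p < ExtFilling d B q} =
      ((A.image (fun j => psi d r (j, y)) ∪ C.image (fun j => psi d r (er x j)) : Finset (ℤ × ℤ)) : Set (ℤ × ℤ)) := by
    have fromA : ∀ j, x < j → j < y → w y < w j → B p < ExtFilling d B (psi d r (j, y)) → j ∈ A := by
      intro j h1 h2 h3 h4
      rw [hA, Finset.mem_filter, Finset.mem_Ioo]
      refine ⟨⟨h1, h2⟩, h3, ?_⟩
      have hm := (rp_mem h h2).2 h3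
      have e : rp j y = (j, y) := by unfold rp; rw [if_pos (by omega)]
      rw [hrp]
      rw [e] at hm ⊢
      have := (val1 _ hm).1
      omega
    have fromC : ∀ j, x < j → j < y → w j < w x → B p < ExtFilling d B (psi d r (er x j)) → j ∈ C := by
      intro j h1 h2 h3 h4
      rw [hC, Finset.mem_filter, Finset.mem_Ioo]
      refine ⟨⟨h1, h2⟩, h3, ?_⟩
      have := val3 j h1 h3
      rw [hrp]
      omega
    ext s
    obtain ⟨s1, s2⟩ := s
    simp only [Finset.coe_union, Finset.coe_image, Set.mem_union, Set.mem_image, Finset.mem_coe]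
    constructor
    · rintro ⟨hs, hlt⟩
      rcases hs with ((hs | ⟨hsD, hs⟩) | ⟨hsD, hs⟩) | hs
      · exfalso
        have hs : (s1, s2) = p := hs
        have := (val1 _ hq).1
        rw [hpsi] at this
        rw [hs] at hlt
        omega
      · rw [mem_D] at hsD
        rw [hpc] at hs
        simp only at hs hsD
        rcases hs with hs | hs
        · left
          have e : psi d r ((if s2 < 0 then s2 - r else s2), y) = (s1, s2) := by
            simp only [psi, Prod.mk.injEq]
            split_ifs <;> omega
          refine ⟨if s2 < 0 then s2 - r else s2, ?_, e⟩
          have g : x < (if s2 < 0 then s2 - (r:ℤ) else s2) ∧ (if s2 < 0 then s2 - (r:ℤ) else s2) < y ∧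
              (0 ≤ (if s2 < 0 then s2 - (r:ℤ) else s2) ∨ (if s2 < 0 then s2 - (r:ℤ) else s2) < -r) := by
            split_ifs at hs ⊢ <;> omega
          apply fromA _ g.1 g.2.1 ((memA _ g.1 g.2.1).2 g.2.2)
          rw [e]; exact hlt
        · right
          have g : x < d + r + 1 - s1 ∧ d + r + 1 - s1 < y ∧ 0 ≤ x + (d + r + 1 - s1) := by
            split_ifs at hs <;> omega
          have e : psi d r (er x (d + r + 1 - s1)) = (s1, s2) := by
            unfold er
            rw [if_neg (by omega)]
            simp only [psi, Prod.mk.injEq]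
            split_ifs at hs ⊢ <;> omega
          refine ⟨d + r + 1 - s1, ?_, e⟩
          apply fromC _ g.1 g.2.1 ((memC _ g.1 g.2.1).2 (by omega))
          rw [e]; exact hlt
      · rw [mem_D] at hsD
        rw [hpc] at hs
        simp only at hs hsD
        right
        have hx : x < 0 := by
          by_contra hc
          rw [if_neg hc] at hs
          omega
        rw [if_pos hx] at hs
        have g : x < -(if s2 < 0 then s2 - (r:ℤ) else s2) ∧ -(if s2 < 0 then s2 - (r:ℤ) else s2) < y ∧
            x + -(if s2 < 0 then s2 - (r:ℤ) else s2) < 0 ∧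
            (-(if s2 < 0 then s2 - (r:ℤ) else s2) ≤ 0 ∨ r < -(if s2 < 0 then s2 - (r:ℤ) else s2)) := by
          split_ifs <;> omega
        have e : psi d r (er x (-(if s2 < 0 then s2 - r else s2))) = (s1, s2) := by
          unfold er
          rw [if_pos g.2.2.1]
          simp only [psi, Prod.mk.injEq]
          split_ifs <;> omega
        refine ⟨_, ?_, e⟩
        apply fromC _ g.1 g.2.1 ((memC _ g.1 g.2.1).2 (by omega))
        rw [e]; exact hlt
      · right
        simp only [Set.mem_ofPred_eq, Prod.mk.injEq] at hs
        rw [hpc] at hs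
        simp only at hs
        have hx : x < 0 := by
          by_contra hc
          rw [if_neg hc] at hs
          omega
        rw [if_pos hx] at hs
        have e : psi d r (er x (-x)) = (s1, s2) := by
          unfold er
          rw [if_neg (by omega)]
          simp only [psi, Prod.mk.injEq]
          rw [if_pos hx]; omega
        refine ⟨-x, ?_, e⟩
        apply fromC _ (by omega) (by omega) ((memC _ (by omega) (by omega)).2 (by omega))
        rw [e]; exact hlt
    · rintro (⟨j, hj, e⟩ | ⟨j, hj, e⟩)
      · rw [hA, Finset.mem_filter, Finset.mem_Ioo] at hj
        obtain ⟨⟨h1, h2⟩, h3, h4⟩ := hj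
        have hm := (rp_mem h h2).2 h3
        have e' : rp j y = (j, y) := by unfold rp; rw [if_pos (by omega)]
        rw [e'] at hm h4
        rw [hrp] at h4
        have hv := val1 _ hm
        rw [e] at hv
        refine ⟨?_, by omega⟩
        have h5 := (memA j h1 h2).1 h3
        refine Or.inl (Or.inl (Or.inr ⟨hv.2, Or.inl ?_⟩))
        rw [hpc]
        simp only [psi, Prod.mk.injEq] at e
        simp only
        split_ifs at e ⊢ <;> omega
      · rw [hC, Finset.mem_filter, Finset.mem_Ioo] at hj
        obtain ⟨⟨h1, h2⟩, h3, h4⟩ := hj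
        have hv3 := val3 j h1 h3
        rw [e] at hv3
        rw [hrp] at h4
        refine ⟨?_, by omega⟩
        have h5 := (memC j h1 h2).1 h3
        have hm := (rp_mem h h1).2 h3
        rcases lt_trichotomy (x + j) 0 with c | c | c
        · have e2 : rp x j = (-j, -x) := by unfold rp; rw [if_neg (by omega), if_pos c]
          have e3 : er x j = (-j, -x) := by unfold er; rw [if_pos c]
          rw [e2] at hm
          rw [e3] at e
          have hv := val1 _ hm
          rw [e] at hv
          refine Or.inl (Or.inr ⟨hv.2, ?_⟩)
          rw [hpc]
          simp only [psi, Prod.mk.injEq] at e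
          simp only
          rw [if_pos (by omega)]
          omega
        · have e3 : er x j = (x, j) := by unfold er; rw [if_neg (by omega)]
          rw [e3] at e
          refine Or.inr ?_
          simp only [Set.mem_ofPred_eq, Prod.mk.injEq]
          rw [hpc]
          simp only [psi, Prod.mk.injEq] at e
          simp only
          rw [if_pos (by omega)] at e ⊢
          omega
        · have e2 : rp x j = (x, j) := by unfold rp; rw [if_pos (by omega)]
          have e3 : er x j = (x, j) := by unfold er; rw [if_neg (by omega)]
          rw [e2] at hm
          rw [e3] at e
          have hv := val1 _ hm
          rw [e] at hv
          refine Or.inl (Or.inl (Or.inr ⟨hv.2, Or.inr ?_⟩))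
          rw [hpc]
          simp only [psi, Prod.mk.injEq] at e
          simp only
          omega
  rw [hS, Set.ncard_coe_finset, Finset.card_union_of_disjoint, Finset.card_image_of_injOn, Finset.card_image_of_injOn]
  · intro j hj j' hj' e
    rw [Finset.mem_coe, hC, Finset.mem_filter, Finset.mem_Ioo] at hj hj'
    have g := (memC j hj.1.1 hj.1.2).1 hj.2.1
    have g' := (memC j' hj'.1.1 hj'.1.2).1 hj'.2.1
    have := psi_inj (by unfold er; split_ifs <;> simp only <;> omega) (by unfold er; split_ifs <;> simp only <;> omega) e
    unfold er at this
    split_ifs at this <;> simp only [Prod.mk.injEq] at this <;> omega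
  · intro j hj j' hj' e
    rw [Finset.mem_coe, hA, Finset.mem_filter, Finset.mem_Ioo] at hj hj'
    have g := (memA j hj.1.1 hj.1.2).1 hj.2.1
    have g' := (memA j' hj'.1.1 hj'.1.2).1 hj'.2.1
    have := psi_inj (by simp only; omega) (by simp only; omega) e
    simp only [Prod.mk.injEq] at this
    omega
  · rw [Finset.disjoint_left]
    intro s hs hs'
    rw [Finset.mem_image] at hs hs'
    obtain ⟨j, hj, e⟩ := hs
    obtain ⟨j', hj', e'⟩ := hs'
    rw [hA, Finset.mem_filter, Finset.mem_Ioo] at hj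
    rw [hC, Finset.mem_filter, Finset.mem_Ioo] at hj'
    have g := (memA j hj.1.1 hj.1.2).1 hj.2.1
    have g' := (memC j' hj'.1.1 hj'.1.2).1 hj'.2.1
    have := psi_inj (by simp only; omega) (by unfold er; split_ifs <;> simp only <;> omega) (e.trans e'.symm)
    unfold er at this
    split_ifs at this <;> simp only [Prod.mk.injEq] at this <;> omega

theorem rk_eq {d r : ℕ} {p : ℤ × ℤ} (hp : p ∈ Diagram d (Zlam d r)) :
    rk d (Zlam d r) p.1 p.2 - 1 = ((Finset.Ioo (phi d r p).1 (phi d r p).2).card : ℤ) := by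
  rw [mem_D] at hp
  simp only [Int.card_Ioo, rk, Zlam, phi]
  split_ifs <;> omega

theorem cond_iff {d r : ℕ} {w : Equiv.Perm ℤ} (hw : IsWdr d r w) {f B : ℤ × ℤ → ℕ} {N : ℕ}
    (rel : ∀ p ∈ Diagram d (Zlam d r), f (phi d r p) + B p = N + 1) {p : ℤ × ℤ}
    (hp : p ∈ Diagram d (Zlam d r)) :
    ({q ∈ ExtHook d (Zlam d r) p.1 p.2 | B p < ExtFilling d B q}.ncard : ℤ) =
      rk d (Zlam d r) p.1 p.2 - 1 ↔
    ∑ j ∈ Finset.Ioo (phi d r p).1 (phi d r p).2, tm w f (phi d r p).1 (phi d r p).2 j =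
      (Finset.Ioo (phi d r p).1 (phi d r p).2).card := by
  rw [rk_eq hp, hook_count hw rel hp]
  exact Nat.cast_inj

theorem flip_bij (N : ℕ) : Set.BijOn (fun n => N + 1 - n) (Set.Icc 1 N) (Set.Icc 1 N) := by
  have hm : Set.MapsTo (fun n => N + 1 - n) (Set.Icc 1 N) (Set.Icc 1 N) := by
    intro n hn; simp only [Set.mem_Icc] at *; omega
  have hi : Set.LeftInvOn (fun n => N + 1 - n) (fun n => N + 1 - n) (Set.Icc 1 N) := by
    intro n hn; simp only [Set.mem_Icc] at *; omega
  exact Set.InvOn.bijOn ⟨hi, hi⟩ hm hm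

open Classical in
theorem card_bst_eq_bal {d r : ℕ} {w : Equiv.Perm ℤ} (hw : IsWdr d r w) :
    Nat.card {f : ℤ × ℤ → ℕ // BalF w (sizeP d (Zlam d r)) f} =
      Nat.card {B : ℤ × ℤ → ℕ // IsBalanced d (Zlam d r) B} := by
  obtain ⟨hbij, hinv, hmap⟩ := phi_bij hw
  have hbij' : Set.BijOn (psi d r) (Rt w) (Diagram d (Zlam d r)) := hinv.symm.bijOn hmap hbij.mapsTo
  set N := sizeP d (Zlam d r) with hN
  refine Nat.card_eq_of_bijective
    (fun f => ⟨fun p => if p ∈ Diagram d (Zlam d r) then N + 1 - f.1 (phi d r p) else 0, ?_⟩) ⟨?_, ?_⟩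
  · obtain ⟨f, hb⟩ := f
    refine ⟨⟨?_, ?_⟩, ?_⟩
    · refine (((flip_bij N).comp hb.1).comp hbij).congr ?_
      intro p hp
      simp only [hp, if_true, Function.comp]
    · intro p hp
      simp only [hp, if_false]
    · intro p hp
      refine (cond_iff hw (f := f) (N := N)
        (B := fun p => if p ∈ Diagram d (Zlam d r) then N + 1 - f (phi d r p) else 0) ?_ hp).2 ?_
      · intro p hp
        have := hb.1.mapsTo (hbij.mapsTo hp)
        simp only [Set.mem_Icc] at this
        simp only [hp, if_true]; omega
      · exact hb.2.2 _ (hbij.mapsTo hp)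
  · rintro ⟨f, hf⟩ ⟨g, hg⟩ e
    simp only [Subtype.mk.injEq] at e ⊢
    funext q
    by_cases hq : q ∈ Rt w
    · have := congrFun e (psi d r q)
      simp only [hmap hq, if_true, hinv.2 hq] at this
      have h1 := hf.1.mapsTo hq
      have h2 := hg.1.mapsTo hq
      simp only [Set.mem_Icc] at h1 h2
      omega
    · rw [hf.2.1 q hq, hg.2.1 q hq]
  · rintro ⟨B, ⟨hB1, hB2⟩, hB3⟩
    have hBr : ∀ p ∈ Diagram d (Zlam d r), 1 ≤ B p ∧ B p ≤ N := fun p hp => hB1.mapsTo hp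
    refine ⟨⟨fun q => if q ∈ Rt w then N + 1 - B (psi d r q) else 0, ?_, ?_, ?_⟩, ?_⟩
    · refine (((flip_bij N).comp hB1).comp hbij').congr ?_
      intro p hp
      simp only [hp, if_true, Function.comp]
    · intro q hq
      simp only [hq, if_false]
    · intro q hq
      have hp := hmap hq
      have := (cond_iff hw (f := fun q => if q ∈ Rt w then N + 1 - B (psi d r q) else 0) (B := B) (N := N) ?_ hp).1
        (hB3 _ hp)
      · rw [hinv.2 hq] at this
        exact this
      · intro p hp
        have h1 := hBr p hp
        simp only [hbij.mapsTo hp, if_true, hinv.1 hp]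
        omega
    · apply Subtype.ext
      funext p
      by_cases hp : p ∈ Diagram d (Zlam d r)
      · have h1 := hBr p hp
        simp only [hp, if_true, hbij.mapsTo hp, hinv.1 hp]
        omega
      · simp only [hp, if_false]
        exact (hB2 p hp).symm

/-- `|BS(Z(d,r))| = |Red(w^{(d,r)})|`. -/
theorem bst_card_eq_red_card (d r : ℕ) (hd : 1 ≤ d)
    (w : Equiv.Perm ℤ) (hw : IsWdr d r w) :
    Nat.card {B : ℤ × ℤ → ℕ // IsBalanced d (Zlam d r) B} =
      Nat.card {L : List ℕ // IsReducedWord (d + r) w L} := by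
  obtain ⟨h1, h2⟩ := ncard_RtW hw
  rw [← card_bst_eq_bal hw, ← h2]
  exact card_bal_eq_red hw.1 h1

end BST
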